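/- arXiv:2505.05014 — 2 statements merged into one kernel-verified Lean document; each statement's English description precedes it below -/
import Mathlib

section
/- Let n ≥ 5 be odd, κ > 0, and s ∈ ℝ with 0 < s ≤ κ/n, and let Q = Q(n,κ,s). Then Q has a unique Nash equilibrium π, namely π = (1/(4κ + (n−4)s))·x where x_i = κ for i ∈ {1, n}, x_{(n+1)/2} = 2κ − s, and x_i = s otherwise; moreover π_min := minᵢ πᵢ satisfies π_min ≥ s/(5κ). -/
/-!
Write `n = 2m + 1` and `c = κ - s`. Apart from its two corner entries, `Q` is the circulant matrix in
which `i` beats the `m` moves that follow it cyclically, so consecutive columns differ in few places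
(`Qmat_col_sub`). With indices from `0` and read mod `n`, a vector `p` in the left kernel of `Q`
therefore satisfies `κ (p_j + p_{j+1} - 2 p_{j+m+1}) = 0` for `0 ≤ j ≤ n - 2`, except that the right
side is `c p_{n-1}` at `j = 0` and `c p_0` at `j = n - 2` (`vecMul_sub`). Let `x` be `qvec n κ s`.

*The vector `x` lies in the kernel* (`qvec_vecMul`): it satisfies these relations, so all entries of
`xQ` are equal; since `xQxᵀ = 0` by skew-symmetry and `x` has positive sum, they vanish.

*The kernel is spanned by `x`* (`ker_eq_smul`): along the ordering `p_{m+1}, p_1, p_{m+2}, p_2, …,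
p_{2m-1}, p_{m-1}` the uncorrected relations are `w_{k-1} + w_{k+1} = 2 w_k`, so these entries form an
arithmetic progression; the two corrected relations force its difference to be `0`, and the three
remaining entries are then determined up to the common scale.

*Nash equilibria lie in the kernel* (`IsNashEq.vecMul_eq_zero`): an equilibrium has `πQ ≥ 0`, while
`πQ · x = 0` and `x > 0`, so `πQ = 0`.
-/

open Matrix

/-- The matrix `Q(n,κ,s)`; indices `0,…,n−1` of `Fin n` correspond to moves `1,…,n`:
`q_ii = 0`; for `i < j`: `q_ij = −2κ+s` if `(i,j)=(1,n)` (i.e. `j−i = n−1`),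
`q_ij = κ` if `1 ≤ j−i ≤ (n−1)/2`, and `q_ij = −κ` if `(n+1)/2 ≤ j−i ≤ n−2`;
and `q_ij = −q_ji` for `i > j`. -/
def Qmat (n : ℕ) (κ s : ℝ) : Matrix (Fin n) (Fin n) ℝ :=
  Matrix.of fun i j =>
    if (i : ℕ) = (j : ℕ) then 0
    else if (i : ℕ) < (j : ℕ) then
      (if (j : ℕ) - (i : ℕ) = n - 1 then -2 * κ + s
       else if (j : ℕ) - (i : ℕ) ≤ (n - 1) / 2 then κ else -κ)
    else
      -(if (i : ℕ) - (j : ℕ) = n - 1 then -2 * κ + s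
        else if (i : ℕ) - (j : ℕ) ≤ (n - 1) / 2 then κ else -κ)

/-- `π` is a Nash equilibrium of the (skew-symmetric) pay-off matrix `A`:
`π ∈ S_n⁺` and `πᵀAy ≥ 0` for every `y ∈ S_n⁺`. -/
def IsNashEq {n : ℕ} (A : Matrix (Fin n) (Fin n) ℝ) (π : Fin n → ℝ) : Prop :=
  (∑ i, π i = 1) ∧ (∀ i, 0 ≤ π i) ∧
    ∀ y : Fin n → ℝ, (∑ i, y i = 1) → (∀ i, 0 ≤ y i) → 0 ≤ π ᵥ* A ⬝ᵥ y

/-- The vector `x` with `x_i = κ` for `i ∈ {1, n}`, `x_{(n+1)/2} = 2κ − s`, and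
`x_i = s` otherwise (0-based: indices `0`, `n−1`, and `(n−1)/2`). -/
def qvec (n : ℕ) (κ s : ℝ) : Fin n → ℝ :=
  fun i => if (i : ℕ) = 0 ∨ (i : ℕ) = n - 1 then κ
           else if (i : ℕ) = (n - 1) / 2 then 2 * κ - s else s

lemma Qmat_skew (n : ℕ) (κ s : ℝ) (i j : Fin n) : Qmat n κ s j i = -Qmat n κ s i j := by
  simp only [Qmat, Matrix.of_apply]
  rcases lt_trichotomy (i : ℕ) (j : ℕ) with h | h | h
  · simp [h, h.ne, h.ne', h.not_gt]
  · simp [h]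
  · simp [h, h.ne, h.ne', h.not_gt]

/-- The difference of two consecutive columns of `Q`. The index `j + m + 1` mod `2m + 1` is written
out as a case distinction. -/
lemma Qmat_col_sub (m : ℕ) (hm : 2 ≤ m) (κ s : ℝ) (i : Fin (2 * m + 1)) (j : ℕ)
    (hj : j < 2 * m) :
    Qmat (2 * m + 1) κ s i ⟨j + 1, by omega⟩ - Qmat (2 * m + 1) κ s i ⟨j, by omega⟩
      = κ * (if (i : ℕ) = j then 1 else 0) + κ * (if (i : ℕ) = j + 1 then 1 else 0)
        - 2 * κ * (if (i : ℕ) = (if j < m then j + m + 1 else j - m) then 1 else 0)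
        - (if j = 0 then κ - s else 0) * (if (i : ℕ) = 2 * m then 1 else 0)
        - (if j = 2 * m - 1 then κ - s else 0) * (if (i : ℕ) = 0 then 1 else 0) := by
  obtain ⟨i, hi⟩ := i
  have h1 : 2 * m + 1 - 1 = 2 * m := by omega
  have h2 : 2 * m / 2 = m := by omega
  simp only [Qmat, Matrix.of_apply, h1, h2]
  -- Discarding impossible branches after each split keeps the number of cases small.
  repeat' (first | omega | split)
  all_goals ring

/-- The difference of two consecutive entries of `pQ`; `P` extends `p` to all of `ℕ`, which allows
plain arithmetic on indices. -/
lemma vecMul_sub (m : ℕ) (hm : 2 ≤ m) (κ s : ℝ) (P : ℕ → ℝ) (j : ℕ) (hj : j < 2 * m) :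
    ((fun i : Fin (2 * m + 1) => P i) ᵥ* Qmat (2 * m + 1) κ s) ⟨j + 1, by omega⟩
      - ((fun i : Fin (2 * m + 1) => P i) ᵥ* Qmat (2 * m + 1) κ s) ⟨j, by omega⟩
      = κ * (P j + P (j + 1) - 2 * P (if j < m then j + m + 1 else j - m))
        - (if j = 0 then κ - s else 0) * P (2 * m)
        - (if j = 2 * m - 1 then κ - s else 0) * P 0 := by
  have pick : ∀ k, k < 2 * m + 1 →
      ∑ i : Fin (2 * m + 1), P i * (if (i : ℕ) = k then 1 else 0) = P k := by
    intro k hk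
    rw [Fin.sum_univ_eq_sum_range (fun i => P i * (if i = k then 1 else 0))]
    simp [hk]
  have e : ∀ i : Fin (2 * m + 1),
      P i * Qmat (2 * m + 1) κ s i ⟨j + 1, by omega⟩ - P i * Qmat (2 * m + 1) κ s i ⟨j, by omega⟩
      = κ * (P i * (if (i : ℕ) = j then 1 else 0)) + κ * (P i * (if (i : ℕ) = j + 1 then 1 else 0))
        - 2 * κ * (P i * (if (i : ℕ) = (if j < m then j + m + 1 else j - m) then 1 else 0))
        - (if j = 0 then κ - s else 0) * (P i * (if (i : ℕ) = 2 * m then 1 else 0))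
        - (if j = 2 * m - 1 then κ - s else 0) * (P i * (if (i : ℕ) = 0 then 1 else 0)) := by
    intro i
    rw [← mul_sub, Qmat_col_sub m hm κ s i j hj]
    ring
  simp only [Matrix.vecMul, dotProduct]
  rw [← Finset.sum_sub_distrib, Finset.sum_congr rfl fun i _ => e i]
  simp only [Finset.sum_sub_distrib, Finset.sum_add_distrib, ← Finset.mul_sum]
  rw [pick j (by omega), pick (j + 1) (by omega), pick _ (by split_ifs <;> omega),
    pick (2 * m) (by omega), pick 0 (by omega)]
  ring

lemma vecMul_dotProduct_comm (n : ℕ) (κ s : ℝ) (p y : Fin n → ℝ) :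
    p ᵥ* Qmat n κ s ⬝ᵥ y = -(y ᵥ* Qmat n κ s ⬝ᵥ p) := by
  have hT : (Qmat n κ s)ᵀ = -Qmat n κ s := by
    ext i j
    simp [Qmat_skew n κ s i j]
  rw [← Matrix.dotProduct_mulVec, ← Matrix.vecMul_transpose, hT, Matrix.vecMul_neg,
    dotProduct_neg, dotProduct_comm]

/-- The entries of `qvec (2m+1) κ s`, as a function on `ℕ`. -/
def qfun (m : ℕ) (κ s : ℝ) (i : ℕ) : ℝ :=
  if i = 0 ∨ i = 2 * m then κ else if i = m then 2 * κ - s else s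

lemma qvec_eq (m : ℕ) (κ s : ℝ) :
    qvec (2 * m + 1) κ s = fun i : Fin (2 * m + 1) => qfun m κ s i := by
  have h1 : 2 * m + 1 - 1 = 2 * m := by omega
  have h2 : 2 * m / 2 = m := by omega
  funext i
  simp only [qvec, qfun, h1, h2]

lemma sum_qvec (m : ℕ) (hm : 2 ≤ m) (κ s : ℝ) :
    ∑ i, qvec (2 * m + 1) κ s i = 4 * κ + ((2 * m + 1 : ℝ) - 4) * s := by
  have e : ∀ i ∈ Finset.range (2 * m + 1), qfun m κ s i = s + (κ - s) * (if i = 0 then 1 else 0)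
      + (κ - s) * (if i = 2 * m then 1 else 0) + (2 * κ - 2 * s) * (if i = m then 1 else 0) := by
    intro i _
    simp only [qfun]
    split_ifs <;> first | omega | ring
  have hlt : m < 2 * m + 1 := by omega
  rw [qvec_eq, Fin.sum_univ_eq_sum_range (qfun m κ s), Finset.sum_congr rfl e]
  simp only [Finset.sum_add_distrib, ← Finset.mul_sum, Finset.sum_ite_eq', Finset.mem_range,
    Finset.sum_const, Finset.card_range, nsmul_eq_mul]
  simp [hlt]
  ring

lemma le_qvec (n : ℕ) (κ s : ℝ) (h : s ≤ κ) (i : Fin n) : s ≤ qvec n κ s i := by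
  simp only [qvec]
  split_ifs <;> linarith

lemma qvec_vecMul (m : ℕ) (hm : 2 ≤ m) (κ s : ℝ) (hs : 0 < s) (hsκ : s ≤ κ) :
    qvec (2 * m + 1) κ s ᵥ* Qmat (2 * m + 1) κ s = 0 := by
  set v := qvec (2 * m + 1) κ s ᵥ* Qmat (2 * m + 1) κ s with hv
  have hstep : ∀ j (hj : j < 2 * m), v ⟨j + 1, by omega⟩ = v ⟨j, by omega⟩ := by
    intro j hj
    have e0 : qfun m κ s 0 = κ := by simp [qfun]
    have e1 : qfun m κ s (2 * m) = κ := by simp [qfun]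
    rw [← sub_eq_zero, hv, qvec_eq, vecMul_sub m hm κ s _ j hj, e0, e1]
    simp only [qfun]
    repeat' (first | omega | split)
    all_goals ring
  have hconst : ∀ j (hj : j < 2 * m + 1), v ⟨j, hj⟩ = v 0 := by
    intro j
    induction j with
    | zero => intro _; rfl
    | succ k ih => intro hk; rw [hstep k (by omega), ih (by omega)]
  have h0 : v ⬝ᵥ qvec (2 * m + 1) κ s = 0 := by
    have := vecMul_dotProduct_comm (2 * m + 1) κ s (qvec (2 * m + 1) κ s) (qvec (2 * m + 1) κ s)
    rw [← hv] at this
    linarith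
  have h1 : v 0 * ∑ i, qvec (2 * m + 1) κ s i = 0 := by
    rw [← h0, dotProduct, Finset.mul_sum]
    exact Finset.sum_congr rfl fun i _ => by rw [hconst i i.2]
  have hpos : 0 < ∑ i, qvec (2 * m + 1) κ s i :=
    Finset.sum_pos (fun i _ => hs.trans_le (le_qvec _ κ s hsκ i)) ⟨0, Finset.mem_univ _⟩
  have h2 : v 0 = 0 := (mul_eq_zero.mp h1).resolve_right hpos.ne'
  funext i
  rw [hconst i i.2, h2, Pi.zero_apply]

/-- The left kernel of `Q` is spanned by `qvec`. -/
lemma ker_eq_smul (m : ℕ) (hm : 2 ≤ m) (κ s : ℝ) (hs : 0 < s) (hsκ : s ≤ κ)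
    (p : Fin (2 * m + 1) → ℝ) (hp : p ᵥ* Qmat (2 * m + 1) κ s = 0) :
    ∃ t : ℝ, p = t • qvec (2 * m + 1) κ s := by
  obtain ⟨P, hP⟩ : ∃ P : ℕ → ℝ, p = fun i : Fin (2 * m + 1) => P i :=
    ⟨fun i => if h : i < 2 * m + 1 then p ⟨i, h⟩ else 0, by funext i; simp only [i.2, dif_pos]⟩
  have hκ : 0 < κ := by linarith
  have rel : ∀ j, j < 2 * m → κ * (P j + P (j + 1) - 2 * P (if j < m then j + m + 1 else j - m))
        - (if j = 0 then κ - s else 0) * P (2 * m)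
        - (if j = 2 * m - 1 then κ - s else 0) * P 0 = 0 := by
    intro j hj
    rw [← vecMul_sub m hm κ s P j hj, ← hP, hp]
    simp
  have relA : ∀ j, 1 ≤ j → j < m → P j + P (j + 1) = 2 * P (j + m + 1) := by
    intro j h1 h2
    have h := rel j (by omega)
    rw [if_pos h2, if_neg (by omega), if_neg (by omega)] at h
    have : κ * (P j + P (j + 1) - 2 * P (j + m + 1)) = 0 := by linarith
    linarith [(mul_eq_zero.mp this).resolve_left hκ.ne']
  have relB : ∀ j, j + 1 < m → P (m + j) + P (m + j + 1) = 2 * P j := by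
    intro j h2
    have h := rel (m + j) (by omega)
    rw [if_neg (by omega), if_neg (by omega), if_neg (by omega), Nat.add_sub_cancel_left] at h
    have : κ * (P (m + j) + P (m + j + 1) - 2 * P j) = 0 := by linarith
    linarith [(mul_eq_zero.mp this).resolve_left hκ.ne']
  have rel0 : κ * (P 0 + P 1 - 2 * P (m + 1)) = (κ - s) * P (2 * m) := by
    have h := rel 0 (by omega)
    rw [if_pos (by omega), if_pos rfl, if_neg (by omega)] at h
    simp only [zero_add] at h
    linarith
  obtain ⟨r, rfl⟩ : ∃ r, m = r + 2 := ⟨m - 2, by omega⟩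
  have relL : κ * (P (2 * r + 3) + P (2 * (r + 2)) - 2 * P (r + 1)) = (κ - s) * P 0 := by
    have h := rel (2 * r + 3) (by omega)
    rw [if_neg (by omega), if_neg (by omega), if_pos (by omega),
      show 2 * r + 3 - (r + 2) = r + 1 by omega] at h
    rw [show 2 * (r + 2) = 2 * r + 3 + 1 by ring] at h ⊢
    linarith
  -- The arithmetic progression has first term `a = P (m + 1)` and difference `d`.
  obtain ⟨d, hd⟩ : ∃ d, d = P 1 - P (r + 2 + 1) := ⟨_, rfl⟩
  have ap : ∀ k, k ≤ r → P (r + 2 + (k + 1)) = P (r + 2 + 1) + 2 * k * d ∧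
      P (k + 1) = P (r + 2 + 1) + (2 * k + 1) * d := by
    intro k
    induction k with
    | zero => intro _; constructor <;> simp [hd]
    | succ k ih =>
      intro hk
      obtain ⟨h1, h2⟩ := ih (by omega)
      have hB := relB (k + 1) (by omega)
      have hA := relA (k + 1) (by omega) (by omega)
      rw [show k + 1 + (r + 2) + 1 = r + 2 + (k + 1) + 1 by ring] at hA
      push_cast
      rw [show r + 2 + (k + 1 + 1) = r + 2 + (k + 1) + 1 by ring]
      constructor <;> linarith
  obtain ⟨hr1, hr2⟩ := ap r le_rfl
  have e0 := relB 0 (by omega)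
  have e1 := relA (r + 1) (by omega) (by omega)
  rw [show r + 1 + (r + 2) + 1 = 2 * (r + 2) by ring, show r + 1 + 1 = r + 2 by ring] at e1
  rw [show r + 2 + (r + 1) = 2 * r + 3 by ring] at hr1
  simp only [add_zero] at e0
  have hd0 : d = 0 := by
    have : d * (4 * κ + (2 * r + 1) * s) = 0 := by
      rw [hr1, hr2] at relL
      rw [hr2] at e1
      have h1 : P 1 = P (r + 2 + 1) + d := by linarith
      have h2 : P 0 = (P (r + 2) + P (r + 2 + 1)) / 2 := by linarith
      have h3 : P (2 * (r + 2)) = (P (r + 2 + 1) + (2 * r + 1) * d + P (r + 2)) / 2 := by linarith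
      rw [h1, h2, h3] at rel0
      rw [h2, h3] at relL
      linear_combination 2 * rel0 - 2 * relL
    exact (mul_eq_zero.mp this).resolve_right (by positivity)
  subst hd0
  simp only [mul_zero, add_zero] at ap hr1 hr2
  -- With `d = 0` the corrected relation at `j = 0` ties `P m` to the common value `P (m + 1)`.
  have hab : s * P (r + 2) = (2 * κ - s) * P (r + 2 + 1) := by
    have h1 : P 1 = P (r + 2 + 1) := by linarith
    have h2 : P 0 = (P (r + 2) + P (r + 2 + 1)) / 2 := by linarith
    have h3 : P (2 * (r + 2)) = (P (r + 2 + 1) + P (r + 2)) / 2 := by linarith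
    rw [h1, h2, h3] at rel0
    linear_combination 2 * rel0
  obtain ⟨t, ht⟩ : ∃ t, P (r + 2 + 1) = t * s := ⟨P (r + 2 + 1) / s, by field_simp⟩
  have hb : P (r + 2) = t * (2 * κ - s) := by
    apply mul_left_cancel₀ hs.ne'
    rw [hab, ht]
    ring
  refine ⟨t, ?_⟩
  rw [hP, qvec_eq]
  funext ⟨i, hi⟩
  simp only [Pi.smul_apply, smul_eq_mul, qfun]
  split_ifs with c1 c2
  · rcases c1 with rfl | rfl <;> linarith
  · rw [c2, hb]
  · rcases lt_or_gt_of_ne c2 with h | h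
    · obtain ⟨k, rfl⟩ : ∃ k, i = k + 1 := ⟨i - 1, by omega⟩
      rw [(ap k (by omega)).2, ht]
    · obtain ⟨k, rfl⟩ : ∃ k, i = r + 2 + (k + 1) := ⟨i - (r + 2) - 1, by omega⟩
      rw [(ap k (by omega)).1, ht]

/-- Complementary slackness against the strictly positive kernel vector `qvec`. -/
lemma IsNashEq.vecMul_eq_zero (m : ℕ) (hm : 2 ≤ m) (κ s : ℝ) (hs : 0 < s) (hsκ : s ≤ κ)
    (p : Fin (2 * m + 1) → ℝ) (hp : IsNashEq (Qmat (2 * m + 1) κ s) p) :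
    p ᵥ* Qmat (2 * m + 1) κ s = 0 := by
  obtain ⟨-, -, h⟩ := hp
  have hnn : ∀ j, 0 ≤ (p ᵥ* Qmat (2 * m + 1) κ s) j := by
    intro j
    have := h (Pi.single j 1) (by simp) (fun i => by
      by_cases hij : i = j
      · subst hij; simp
      · simp [hij])
    simpa using this
  have h0 : ∑ j, (p ᵥ* Qmat (2 * m + 1) κ s) j * qvec (2 * m + 1) κ s j = 0 := by
    have := vecMul_dotProduct_comm (2 * m + 1) κ s p (qvec (2 * m + 1) κ s)
    rw [qvec_vecMul m hm κ s hs hsκ] at this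
    simpa [dotProduct] using this
  have hq : ∀ j, 0 < qvec (2 * m + 1) κ s j := fun j => hs.trans_le (le_qvec _ κ s hsκ j)
  rw [Finset.sum_eq_zero_iff_of_nonneg fun j _ => mul_nonneg (hnn j) (hq j).le] at h0
  funext j
  exact (mul_eq_zero.mp (h0 j (Finset.mem_univ j))).resolve_right (hq j).ne'

/-- For odd `n ≥ 5`, `κ > 0` and `0 < s ≤ κ/n`, the matrix `Q(n,κ,s)`
has the unique Nash equilibrium `π = (1/(4κ + (n−4)s))·x`, and `π_min ≥ s/(5κ)`. -/
theorem stmt16 (n : ℕ) (hodd : Odd n) (hn : 5 ≤ n) (κ s : ℝ) (hκ : 0 < κ)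
    (hs0 : 0 < s) (hs : s ≤ κ / n)
    (π : Fin n → ℝ)
    (hπdef : π = (4 * κ + ((n : ℝ) - 4) * s)⁻¹ • qvec n κ s) :
    IsNashEq (Qmat n κ s) π ∧
      (∀ π' : Fin n → ℝ, IsNashEq (Qmat n κ s) π' → π' = π) ∧
      ∀ i, s / (5 * κ) ≤ π i := by
  obtain ⟨m, rfl⟩ := hodd
  have hm : 2 ≤ m := by omega
  have hn0 : (5 : ℝ) ≤ ((2 * m + 1 : ℕ) : ℝ) := by exact_mod_cast hn
  have hns : ((2 * m + 1 : ℕ) : ℝ) * s ≤ κ := by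
    rw [le_div_iff₀ (by linarith)] at hs
    linarith
  have hsκ : s ≤ κ := by nlinarith
  have hsum := sum_qvec m hm κ s
  have hcast : ((2 * m + 1 : ℕ) : ℝ) = 2 * m + 1 := by push_cast; ring
  rw [← hcast] at hsum
  set S := 4 * κ + (((2 * m + 1 : ℕ) : ℝ) - 4) * s with hS
  have hSpos : 0 < S := by nlinarith
  have hS5 : S ≤ 5 * κ := by linarith
  subst hπdef
  refine ⟨⟨?_, ?_, ?_⟩, ?_, ?_⟩
  · simp only [Pi.smul_apply, smul_eq_mul]
    rw [← Finset.mul_sum, hsum, inv_mul_cancel₀ hSpos.ne']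
  · intro i
    have := le_qvec _ κ s hsκ i
    exact mul_nonneg (inv_nonneg.mpr hSpos.le) (by linarith)
  · intro y _ _
    rw [Matrix.smul_vecMul, qvec_vecMul m hm κ s hs0 hsκ]
    simp
  · intro p hp
    obtain ⟨t, rfl⟩ := ker_eq_smul m hm κ s hs0 hsκ p (hp.vecMul_eq_zero m hm κ s hs0 hsκ)
    have h1 := hp.1
    simp only [Pi.smul_apply, smul_eq_mul] at h1
    rw [← Finset.mul_sum, hsum] at h1
    rw [eq_inv_of_mul_eq_one_left h1]
  · intro i
    have := le_qvec _ κ s hsκ i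
    rw [Pi.smul_apply, smul_eq_mul, inv_mul_eq_div]
    exact div_le_div₀ (by linarith) this hSpos hS5
end

section
/- Let n ≥ 3 be odd and let F be a finite field with q elements. Among all n×n matrices M over F that are alternating (Mᵀ = −M and all diagonal entries zero) — of which there are exactly q^{n(n−1)/2} — the fraction having rank exactly n−1 is at least 1 − (n−1)/(2q³). -/
/-!
Write an alternating matrix of odd size `k + 2` as a `k × k` alternating matrix `N` bordered twice,
first by a vector `a`, then by a vector with entries `t` (against the first border) and `b`.
Suppose `N` has rank `k - 1`, and let `u` span its kernel; the range of `N` is then `u^⊥`.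
The bordered matrix has a kernel of dimension at most one unless `u ⬝ a = 0`, `u ⬝ b = 0` and
`t = -(z ⬝ b)` for a solution `z` of `N z = a` (`solution_trivial_of_dot_ne`,
`solution_trivial_of_ne`). At most `q^(k-1) * q^(k-1)` of the `q^(2k+1)` borderings satisfy these
three conditions, so at least a fraction `1 - q⁻³` of them yields rank at least `k + 1`. The rank is
at most `k + 1` because an alternating matrix of odd size has determinant zero, in every
characteristic (`det_eq_zero`). Hence the fraction of matrices of size `2m + 1` and rank `2m` is at
least `(1 - q⁻³)^m`, and Bernoulli's inequality bounds this below by `1 - m q⁻³`.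
-/

open Matrix

namespace Alternating

/-- Alternating matrices: skew-symmetric with zero diagonal. -/
def IsAlt {ι F : Type*} [Field F] (M : Matrix ι ι F) : Prop := Mᵀ = -M ∧ ∀ i, M i i = 0

/-- The matrix `N` bordered by the row `v` and the column `-v`, with corner entry zero. -/
def border {ι F : Type*} [Field F] (v : ι → F) (N : Matrix ι ι F) :
    Matrix (Option ι) (Option ι) F
  | none, none => 0
  | none, some j => v j
  | some i, none => -v i
  | some i, some j => N i j

section Basic

variable {ι F : Type*} [Field F]

lemma IsAlt.apply_swap {M : Matrix ι ι F} (h : IsAlt M) (i j : ι) : M j i = -M i j :=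
  congrFun (congrFun h.1 i) j

lemma IsAlt.border {N : Matrix ι ι F} (h : IsAlt N) (v : ι → F) : IsAlt (border v N) := by
  refine ⟨?_, ?_⟩
  · ext i j
    rcases i with _ | i <;> rcases j with _ | j
    · simp [Alternating.border]
    · simp [Alternating.border]
    · simp [Alternating.border]
    · exact h.apply_swap i j
  · rintro (_ | i)
    · rfl
    · exact h.2 i

/-- An alternating matrix on `Option ι` is the same as a first row and an alternating matrix on
`ι`. -/
def borderEquiv (ι F : Type*) [Field F] :
    {N : Matrix ι ι F // IsAlt N} × (ι → F) ≃
      {M : Matrix (Option ι) (Option ι) F // IsAlt M} where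
  toFun p := ⟨border p.2 p.1.1, p.1.2.border p.2⟩
  invFun M := (⟨M.1.submatrix some some, by
    refine ⟨?_, fun i => M.2.2 _⟩
    ext i j
    exact M.2.apply_swap _ _⟩, fun j => M.1 none (some j))
  left_inv p := rfl
  right_inv M := by
    apply Subtype.ext
    ext i j
    rcases i with _ | i <;> rcases j with _ | j
    · exact (M.2.2 none).symm
    · rfl
    · exact (M.2.apply_swap none (some i)).symm
    · rfl

lemma isAlt_reindex {κ : Type*} (e : ι ≃ κ) (M : Matrix ι ι F) :
    IsAlt (Matrix.reindex e e M) ↔ IsAlt M := by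
  constructor
  · intro h
    refine ⟨?_, fun i => by simpa using h.2 (e i)⟩
    ext i j
    simpa using h.apply_swap (e i) (e j)
  · intro h
    refine ⟨?_, fun i => by simpa using h.2 (e.symm i)⟩
    ext i j
    simpa using h.apply_swap (e.symm i) (e.symm j)

lemma border_mulVec_none [Fintype ι] (v : ι → F) (N : Matrix ι ι F) (y : Option ι → F) :
    (border v N *ᵥ y) none = v ⬝ᵥ (fun i => y (some i)) := by
  simp [Matrix.mulVec, dotProduct, Fintype.sum_option, border]

lemma border_mulVec_some [Fintype ι] (v : ι → F) (N : Matrix ι ι F) (y : Option ι → F) (i : ι) :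
    (border v N *ᵥ y) (some i) = -(v i * y none) + (N *ᵥ (fun i => y (some i))) i := by
  simp [Matrix.mulVec, dotProduct, Fintype.sum_option, border]

lemma dot_mulVec_swap [Fintype ι] {N : Matrix ι ι F} (h : IsAlt N) (x y : ι → F) :
    x ⬝ᵥ (N *ᵥ y) = -(y ⬝ᵥ (N *ᵥ x)) := by
  rw [Matrix.dotProduct_mulVec, ← Matrix.mulVec_transpose, h.1, Matrix.neg_mulVec,
    neg_dotProduct, dotProduct_comm]

lemma dot_mulVec_self [Fintype ι] {N : Matrix ι ι F} (h : IsAlt N) (x : ι → F) :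
    x ⬝ᵥ (N *ᵥ x) = 0 := by
  classical
  simp only [dotProduct, Matrix.mulVec, Finset.mul_sum]
  rw [← Finset.sum_product']
  -- In characteristic two skew-symmetry does not suffice: the diagonal terms are the fixed points.
  refine Finset.sum_involution (fun p _ => (p.2, p.1)) ?_ ?_ ?_ ?_
  · rintro ⟨i, j⟩ -
    simp only [h.apply_swap i j]
    ring
  · rintro ⟨i, j⟩ - hne heq
    simp only [Prod.mk.injEq] at heq
    obtain ⟨rfl, -⟩ := heq
    exact hne (by simp [h.2])
  · simp
  · simp

/-- The Leibniz terms of `σ` and `σ⁻¹` cancel; an involution `σ` of a set of odd size has a fixed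
point, so that its term vanishes. -/
lemma det_eq_zero [Fintype ι] [DecidableEq ι] {M : Matrix ι ι F} (h : IsAlt M)
    (hodd : Odd (Fintype.card ι)) : M.det = 0 := by
  rw [Matrix.det_apply']
  refine Finset.sum_involution (fun σ _ => σ⁻¹) ?_ ?_ ?_ ?_
  · intro σ _
    have h1 : ∏ i, M (σ⁻¹ i) i = -∏ i, M (σ i) i := by
      rw [← Equiv.prod_comp σ]
      simp only [Equiv.Perm.inv_def, Equiv.symm_apply_apply]
      calc ∏ i, M i (σ i) = ∏ i, -M (σ i) i :=
            Finset.prod_congr rfl fun i _ => h.apply_swap _ _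
        _ = _ := by rw [Finset.prod_neg, Finset.card_univ, hodd.neg_one_pow]; ring
    rw [h1, Equiv.Perm.sign_inv]
    ring
  · intro σ _ hne heq
    apply hne
    have hinv : Function.Involutive σ := fun i => by
      nth_rewrite 1 [← heq]
      simp
    have : ∃ i, σ i = i := by
      by_contra! hcon
      have := Equiv.Perm.card_fixedPoints_modEq (f := (⇑σ : ι → ι)) (p := 2) (n := 1)
        (funext hinv)
      have h0 : Fintype.card (Function.fixedPoints σ) = 0 :=
        Fintype.card_eq_zero_iff.mpr ⟨fun x => hcon x.1 x.2⟩
      rw [h0] at this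
      rcases hodd with ⟨k, hk⟩
      rw [hk, Nat.ModEq] at this
      omega
    obtain ⟨i, hi⟩ := this
    rw [Finset.prod_eq_zero (Finset.mem_univ i) (by rw [hi, h.2]), mul_zero]
  · simp
  · simp

/-- A kernel on which some linear functional is injective has dimension at most one. -/
lemma rank_eq_of_functional [Fintype ι] [DecidableEq ι] {M : Matrix ι ι F} (h : IsAlt M)
    (hodd : Odd (Fintype.card ι)) (φ : (ι → F) →ₗ[F] F)
    (hφ : ∀ x, M *ᵥ x = 0 → φ x = 0 → x = 0) : M.rank = Fintype.card ι - 1 := by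
  have h1 := LinearMap.finrank_range_add_finrank_ker M.mulVecLin
  have h2 : Module.finrank F (LinearMap.ker M.mulVecLin) ≤ 1 := by
    have hinj : Function.Injective (φ.comp (LinearMap.ker M.mulVecLin).subtype) := by
      rw [← LinearMap.ker_eq_bot, LinearMap.ker_eq_bot']
      rintro ⟨x, hx⟩ hx'
      exact Subtype.ext (hφ x (by simpa using hx) (by simpa using hx'))
    simpa using LinearMap.finrank_le_finrank_of_injective hinj
  have h3 : LinearMap.ker M.mulVecLin ≠ ⊥ := by
    obtain ⟨v, hv, hv'⟩ := Matrix.exists_mulVec_eq_zero_iff.mpr (det_eq_zero h hodd)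
    intro hbot
    exact hv ((LinearMap.ker_eq_bot'.mp hbot) v (by simpa using hv'))
  have h4 : Module.finrank F (LinearMap.ker M.mulVecLin) ≠ 0 := fun h0 =>
    h3 (Submodule.finrank_eq_zero.mp h0)
  rw [Module.finrank_fintype_fun_eq_card] at h1
  rw [Matrix.rank]
  omega

/-- An alternating matrix of corank one has kernel `span u` and range `u^⊥`. -/
lemma exists_kernel_vector [Fintype ι] [DecidableEq ι] {N : Matrix ι ι F} (h : IsAlt N)
    (hpos : 0 < Fintype.card ι) (hr : N.rank = Fintype.card ι - 1) :
    ∃ u : ι → F, u ≠ 0 ∧ N *ᵥ u = 0 ∧ (∀ x, N *ᵥ x = 0 → ∃ c : F, x = c • u) ∧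
      Module.finrank F (LinearMap.ker (dotProductBilin F F u)) = Fintype.card ι - 1 ∧
      ∀ a, u ⬝ᵥ a = 0 → ∃ x, N *ᵥ x = a := by
  have h1 := LinearMap.finrank_range_add_finrank_ker N.mulVecLin
  rw [Module.finrank_fintype_fun_eq_card] at h1
  rw [Matrix.rank] at hr
  have h2 : Module.finrank F (LinearMap.ker N.mulVecLin) = 1 := by omega
  obtain ⟨⟨u, hu⟩, hu0, hspan⟩ := finrank_eq_one_iff'.mp h2
  have hu' : N *ᵥ u = 0 := by simpa using hu
  have hune : u ≠ 0 := fun h0 => hu0 (Subtype.ext h0)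
  have hk : Module.finrank F (LinearMap.ker (dotProductBilin F F u)) = Fintype.card ι - 1 := by
    have h3 := LinearMap.finrank_range_add_finrank_ker (dotProductBilin F F u)
    rw [Module.finrank_fintype_fun_eq_card] at h3
    have hne : dotProductBilin F F u ≠ 0 := by
      intro h0
      apply hune
      ext i
      simpa using LinearMap.congr_fun h0 (Pi.single i 1)
    rw [LinearMap.range_eq_top.mpr (LinearMap.surjective hne), finrank_top,
      Module.finrank_self] at h3
    omega
  refine ⟨u, hune, hu', ?_, hk, ?_⟩
  · intro x hx
    obtain ⟨c, hc⟩ := hspan ⟨x, by simpa using hx⟩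
    exact ⟨c, (congrArg Subtype.val hc).symm⟩
  · have hle : LinearMap.range N.mulVecLin ≤ LinearMap.ker (dotProductBilin F F u) := by
      rintro _ ⟨x, rfl⟩
      simp [dot_mulVec_swap h u x, hu']
    have heq := Submodule.eq_of_le_of_finrank_eq hle (hr.trans hk.symm)
    intro a ha
    have : a ∈ LinearMap.range N.mulVecLin := by
      rw [heq]
      simpa using ha
    obtain ⟨x, hx⟩ := this
    exact ⟨x, by simpa using hx⟩

/-- With one border `a` not orthogonal to the kernel of `N`, a kernel vector of the doubly bordered
matrix vanishes as soon as its coordinate belonging to the other border does. -/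
lemma solution_trivial_of_dot_ne [Fintype ι] {N : Matrix ι ι F} (h : IsAlt N)
    {u : ι → F} (hu : N *ᵥ u = 0) (hspan : ∀ x, N *ᵥ x = 0 → ∃ c : F, x = c • u)
    {a x : ι → F} {s : F} (ha : u ⬝ᵥ a ≠ 0) (hx : N *ᵥ x = s • a) (hax : a ⬝ᵥ x = 0) :
    s = 0 ∧ x = 0 := by
  have h1 : u ⬝ᵥ (N *ᵥ x) = 0 := by rw [dot_mulVec_swap h, hu]; simp
  rw [hx, dotProduct_smul, smul_eq_mul] at h1
  have hs : s = 0 := by simpa [ha] using h1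
  subst hs
  obtain ⟨c, rfl⟩ := hspan x (by simpa using hx)
  rw [dotProduct_smul, dotProduct_comm, smul_eq_mul] at hax
  have hc : c = 0 := by simpa [ha] using hax
  simp [hc]

/-- If both borders `a = N z` and `b = N w` lie in the range of `N`, the two extra coordinates
`r, s` of a kernel vector of the bordered matrix vanish for all corner entries `t` but one. -/
lemma solution_trivial_of_ne [Fintype ι] {N : Matrix ι ι F} (h : IsAlt N)
    {a b x z w : ι → F} {r s t : F} (hz : N *ᵥ z = a) (hw : N *ᵥ w = b)
    (ht : t ≠ -(z ⬝ᵥ b)) (hx : N *ᵥ x = r • b + s • a) (h1 : a ⬝ᵥ x = t * r)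
    (h2 : b ⬝ᵥ x = -(t * s)) : r = 0 ∧ s = 0 := by
  have hza : z ⬝ᵥ a = 0 := by rw [← hz]; exact dot_mulVec_self h z
  have hwb : w ⬝ᵥ b = 0 := by rw [← hw]; exact dot_mulVec_self h w
  have hwa : w ⬝ᵥ a = -(z ⬝ᵥ b) := by rw [← hz, ← hw]; exact dot_mulVec_swap h w z
  have e1 : a ⬝ᵥ x = -(r * (z ⬝ᵥ b)) := by
    rw [dotProduct_comm, ← hz, dot_mulVec_swap h, hx]
    simp [hza]
  have e2 : b ⬝ᵥ x = s * (z ⬝ᵥ b) := by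
    have := dot_mulVec_swap h x w
    rw [hw, hx] at this
    rw [dotProduct_comm, this]
    simp [hwb, hwa]
  have ht' : t + z ⬝ᵥ b ≠ 0 := fun h0 => ht (eq_neg_of_add_eq_zero_left h0)
  refine ⟨(mul_eq_zero.mp ?_).resolve_left ht', (mul_eq_zero.mp ?_).resolve_left ht'⟩
  · linear_combination e1 - h1
  · linear_combination h2 - e2

/-- The kernel equations of a doubly bordered matrix. -/
lemma border_border_mulVec [Fintype ι] {N : Matrix ι ι F} {a : ι → F} {v : Option ι → F}
    {y : Option (Option ι) → F} (hy : border v (border a N) *ᵥ y = 0) :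
    (N *ᵥ fun i => y (some (some i))) =
        y none • (fun i => v (some i)) + y (some none) • a ∧
      (a ⬝ᵥ fun i => y (some (some i))) = v none * y none ∧
      ((fun i => v (some i)) ⬝ᵥ fun i => y (some (some i))) = -(v none * y (some none)) := by
  have h0 := congrFun hy none
  have h1 := congrFun hy (some none)
  have h2 := fun i => congrFun hy (some (some i))
  simp only [border_mulVec_none, border_mulVec_some, Pi.zero_apply] at h0 h1 h2
  refine ⟨?_, ?_, ?_⟩
  · ext i
    simp only [Pi.add_apply, Pi.smul_apply, smul_eq_mul]
    linear_combination h2 i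
  · linear_combination h1
  · rw [dotProduct, Fintype.sum_option] at h0
    rw [dotProduct]
    linear_combination h0

/-- At most `q^(k-1) * q^(k-1)` borderings of a matrix of size `k` and corank one fail to have
corank one. -/
lemma card_bad_le [Fintype ι] [DecidableEq ι] [Fintype F] {N : Matrix ι ι F} (h : IsAlt N)
    (hodd : Odd (Fintype.card ι)) (hr : N.rank = Fintype.card ι - 1) :
    Nat.card {p : (ι → F) × (Option ι → F) //
        ¬ (border p.2 (border p.1 N)).rank = Fintype.card ι + 1} ≤
      Fintype.card F ^ (Fintype.card ι - 1) * Fintype.card F ^ (Fintype.card ι - 1) := by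
  obtain ⟨u, hu0, hu, hspan, hK, hrange⟩ := exists_kernel_vector h hodd.pos hr
  have hcard : Fintype.card (Option (Option ι)) = Fintype.card ι + 2 := by simp
  have hodd' : Odd (Fintype.card (Option (Option ι))) := by
    rw [hcard]
    exact hodd.add_even even_two
  have key : ∀ (a : ι → F) (v : Option ι → F) (φ : (Option (Option ι) → F) →ₗ[F] F),
      (∀ y, border v (border a N) *ᵥ y = 0 → φ y = 0 → y = 0) →
      (border v (border a N)).rank = Fintype.card ι + 1 := by
    intro a v φ hφ
    rw [rank_eq_of_functional ((h.border a).border v) hodd' φ hφ, hcard]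
    rfl
  have hzero : ∀ y : Option (Option ι) → F, y none = 0 → y (some none) = 0 →
      (fun i => y (some (some i))) = 0 → y = 0 := by
    intro y h0 h1 h2
    ext (_ | _ | i)
    exacts [h0, h1, congrFun h2 i]
  have ha : ∀ (a : ι → F) (v : Option ι → F),
      ¬ (border v (border a N)).rank = Fintype.card ι + 1 → u ⬝ᵥ a = 0 := by
    intro a v hbad
    by_contra hne
    refine hbad (key a v (LinearMap.proj none) fun y hy h0 => ?_)
    replace h0 : y none = 0 := h0
    obtain ⟨e1, e2, -⟩ := border_border_mulVec hy
    rw [h0, zero_smul, zero_add] at e1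
    rw [h0, mul_zero] at e2
    obtain ⟨h1, h2⟩ := solution_trivial_of_dot_ne h hu hspan hne e1 e2
    exact hzero y h0 h1 h2
  have hb : ∀ (a : ι → F) (v : Option ι → F),
      ¬ (border v (border a N)).rank = Fintype.card ι + 1 →
      u ⬝ᵥ (fun i => v (some i)) = 0 := by
    intro a v hbad
    by_contra hne
    refine hbad (key a v (LinearMap.proj (some none)) fun y hy h1 => ?_)
    replace h1 : y (some none) = 0 := h1
    obtain ⟨e1, -, e3⟩ := border_border_mulVec hy
    rw [h1, zero_smul, add_zero] at e1
    rw [h1, mul_zero, neg_zero] at e3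
    obtain ⟨h0, h2⟩ := solution_trivial_of_dot_ne h hu hspan hne e1 e3
    exact hzero y h0 h1 h2
  have ht : ∀ (a z : ι → F) (v : Option ι → F),
      ¬ (border v (border a N)).rank = Fintype.card ι + 1 → N *ᵥ z = a →
      v none = -(z ⬝ᵥ fun i => v (some i)) := by
    intro a z v hbad hz
    by_contra hne
    obtain ⟨w, hw⟩ := hrange _ (hb a v hbad)
    obtain ⟨i, hi⟩ := Function.ne_iff.mp hu0
    refine hbad (key a v (LinearMap.proj (some (some i))) fun y hy hyi => ?_)
    replace hyi : y (some (some i)) = 0 := hyi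
    obtain ⟨e1, e2, e3⟩ := border_border_mulVec hy
    obtain ⟨h0, h1⟩ := solution_trivial_of_ne h hz hw hne e1 e2 e3
    rw [h0, h1, zero_smul, zero_smul, add_zero] at e1
    obtain ⟨c, hc⟩ := hspan _ e1
    have hci : 0 = c * u i := by simpa [hyi] using congrFun hc i
    have hc0 : c = 0 := (mul_eq_zero.mp hci.symm).resolve_right hi
    exact hzero y h0 h1 (by rw [hc, hc0, zero_smul])
  have hcardK : Nat.card (LinearMap.ker (dotProductBilin F F u)) =
      Fintype.card F ^ (Fintype.card ι - 1) := by
    rw [Module.natCard_eq_pow_finrank (K := F), hK, Nat.card_eq_fintype_card]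
  rw [← hcardK, ← Nat.card_prod]
  refine Nat.card_le_card_of_injective (fun p =>
    ((⟨p.1.1, by simpa using ha _ _ p.2⟩, ⟨fun i => p.1.2 (some i), by simpa using hb _ _ p.2⟩) :
      LinearMap.ker (dotProductBilin F F u) × LinearMap.ker (dotProductBilin F F u))) ?_
  rintro ⟨⟨a, v⟩, hp⟩ ⟨⟨a', v'⟩, hp'⟩ heq
  simp only [Prod.mk.injEq, Subtype.mk.injEq] at heq
  obtain ⟨rfl, hv⟩ := heq
  obtain ⟨z, hz⟩ := hrange a (ha _ _ hp)
  have : v = v' := by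
    ext (_ | i)
    · rw [ht a z v hp hz, ht a z v' hp' hz, hv]
    · exact congrFun hv i
  subst this
  rfl

end Basic

/-- The alternating matrices whose rank is one less than their size. -/
def Good (ι F : Type*) [Field F] [Fintype ι] : Type _ :=
  {M : Matrix ι ι F // IsAlt M ∧ M.rank = Fintype.card ι - 1}

section Count

lemma card_good_congr (F : Type*) [Field F] {ι κ : Type*} [Fintype ι] [Fintype κ]
    (e : ι ≃ κ) :
    Nat.card (Good ι F) = Nat.card (Good κ F) := by
  refine Nat.card_congr ((Matrix.reindex e e).subtypeEquiv fun M => ?_)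
  rw [isAlt_reindex, Matrix.rank_reindex, Fintype.card_congr e]

variable (F : Type*) [Field F] [Fintype F]

lemma card_isAlt_fin (n : ℕ) :
    Nat.card {M : Matrix (Fin n) (Fin n) F // IsAlt M} =
      Fintype.card F ^ (n * (n - 1) / 2) := by
  induction n with
  | zero =>
    have : Unique {M : Matrix (Fin 0) (Fin 0) F // IsAlt M} :=
      { default := ⟨0, by ext i; exact i.elim0, fun i => i.elim0⟩
        uniq := fun M => Subtype.ext (Subsingleton.elim _ _) }
    simp
  | succ k ih =>
    have e : {M : Matrix (Fin (k + 1)) (Fin (k + 1)) F // IsAlt M} ≃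
        {M : Matrix (Option (Fin k)) (Option (Fin k)) F // IsAlt M} :=
      (Matrix.reindex (finSuccEquiv k) (finSuccEquiv k)).subtypeEquiv
        fun M => (isAlt_reindex _ M).symm
    rw [Nat.card_congr e, ← Nat.card_congr (borderEquiv (Fin k) F), Nat.card_prod, ih]
    simp only [Nat.card_eq_fintype_card, Fintype.card_fun, Fintype.card_fin]
    rw [← pow_add]
    congr 1
    rw [← Finset.sum_range_id, ← Finset.sum_range_id, Finset.sum_range_succ]

/-- Passing from odd size `k` to size `k + 2` loses at most a fraction `q⁻³`. -/
lemma card_good_step {ι : Type*} [Fintype ι] (hodd : Odd (Fintype.card ι)) :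
    (Nat.card (Good ι F) : ℝ) * ((Fintype.card F : ℝ) ^ (2 * Fintype.card ι + 1) *
        (1 - 1 / (Fintype.card F : ℝ) ^ 3)) ≤ Nat.card (Good (Option (Option ι)) F) := by
  classical
  set q := Fintype.card F with hq
  set k := Fintype.card ι with hk
  have hq0 : (q : ℝ) ≠ 0 := by simp [hq, Fintype.card_ne_zero]
  let P (N : Good ι F) : Type _ := {p : (ι → F) × (Option ι → F) //
    (border p.2 (border p.1 N.1)).rank = k + 1}
  have : Finite (Good ι F) := by unfold Good; infer_instance
  have : Finite (Good (Option (Option ι)) F) := by unfold Good; infer_instance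
  have : Fintype (Good ι F) := Fintype.ofFinite _
  have hP (N : Good ι F) :
      (q : ℝ) ^ (2 * k + 1) * (1 - 1 / (q : ℝ) ^ 3) ≤ (Nat.card (P N) : ℝ) := by
    have hbad := card_bad_le N.2.1 hodd N.2.2
    have hsum := Nat.card_congr (Equiv.sumCompl fun p : (ι → F) × (Option ι → F) =>
      (border p.2 (border p.1 N.1)).rank = k + 1)
    rw [Nat.card_sum, Nat.card_prod] at hsum
    simp only [Nat.card_eq_fintype_card (α := ι → F),
      Nat.card_eq_fintype_card (α := Option ι → F), Fintype.card_fun,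
      Fintype.card_option] at hsum
    change _ = q ^ k * q ^ (k + 1) at hsum
    change _ ≤ q ^ (k - 1) * q ^ (k - 1) at hbad
    obtain ⟨j, hj⟩ : ∃ j, k = j + 1 := ⟨k - 1, by have := hodd.pos; omega⟩
    have h1 : q ^ k * q ^ (k + 1) ≤ Nat.card (P N) + q ^ (k - 1) * q ^ (k - 1) := by
      rw [← hsum]
      exact Nat.add_le_add_left hbad _
    have h2 : (q : ℝ) ^ k * q ^ (k + 1) ≤ Nat.card (P N) + q ^ (k - 1) * q ^ (k - 1) := by
      exact_mod_cast h1
    have h3 : (q : ℝ) ^ (2 * k + 1) * (1 - 1 / (q : ℝ) ^ 3) =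
        (q : ℝ) ^ k * q ^ (k + 1) - q ^ (k - 1) * q ^ (k - 1) := by
      rw [hj]
      field_simp
      simp only [Nat.add_sub_cancel]
      ring
    linarith
  have hinj : Nat.card (Σ N : Good ι F, P N) ≤ Nat.card (Good (Option (Option ι)) F) := by
    refine Nat.card_le_card_of_injective (fun x => ⟨border x.2.1.2 (border x.2.1.1 x.1.1),
      (x.1.2.1.border _).border _, by rw [x.2.2]; simp [hk]⟩) ?_
    rintro ⟨⟨N, hN⟩, ⟨⟨a, v⟩, hp⟩⟩ ⟨⟨N', hN'⟩, ⟨⟨a', v'⟩, hp'⟩⟩ heq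
    have heq' : border v (border a N) = border v' (border a' N') := congrArg Subtype.val heq
    have hv : v = v' := funext fun j => congrFun (congrFun heq' none) (some j)
    have ha : a = a' := funext fun j => congrFun (congrFun heq' (some none)) (some (some j))
    have hNN : N = N' := by
      ext i j
      exact congrFun (congrFun heq' (some (some i))) (some (some j))
    subst hv ha hNN
    rfl
  rw [Nat.card_sigma] at hinj
  have hinj' : ∑ N : Good ι F, (Nat.card (P N) : ℝ) ≤ Nat.card (Good (Option (Option ι)) F) := by
    exact_mod_cast hinj
  refine le_trans ?_ hinj'
  refine le_trans (le_of_eq ?_) (Finset.sum_le_sum fun N _ => hP N)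
  rw [Finset.sum_const, Finset.card_univ, nsmul_eq_mul, Nat.card_eq_fintype_card]

lemma card_good_ge (m : ℕ) :
    (Fintype.card F : ℝ) ^ ((2 * m + 1) * m) * (1 - 1 / (Fintype.card F : ℝ) ^ 3) ^ m ≤
      Nat.card (Good (Fin (2 * m + 1)) F) := by
  have hq1 : (1 : ℝ) ≤ (Fintype.card F : ℝ) := by exact_mod_cast Fintype.card_pos
  induction m with
  | zero =>
    have : Nonempty (Good (Fin (2 * 0 + 1)) F) := ⟨⟨0, ⟨by simp, by simp⟩, by simp⟩⟩
    have : Finite (Good (Fin (2 * 0 + 1)) F) := by unfold Good; infer_instance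
    simpa using Nat.one_le_iff_ne_zero.mpr (Nat.card_pos (α := Good (Fin (2 * 0 + 1)) F)).ne'
  | succ m ih =>
    have e : Fin (2 * (m + 1) + 1) ≃ Option (Option (Fin (2 * m + 1))) :=
      (finSuccEquiv _).trans (finSuccEquiv _).optionCongr
    rw [card_good_congr F e]
    refine le_trans ?_ (card_good_step F (by simp))
    have h0 : 0 ≤ 1 - 1 / (Fintype.card F : ℝ) ^ 3 := by
      rw [sub_nonneg]
      exact div_le_one_of_le₀ (one_le_pow₀ hq1) (by positivity)
    refine le_trans (le_of_eq ?_) (mul_le_mul_of_nonneg_right ih (by positivity))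
    rw [Fintype.card_fin]
    ring

end Count

end Alternating

/-- For odd `n ≥ 3` and a finite field `F` with `q` elements, the number
of alternating `n×n` matrices over `F` (`Mᵀ = −M` with zero diagonal) is exactly
`q^{n(n−1)/2}`, and the fraction of them having rank exactly `n−1` is at least
`1 − (n−1)/(2q³)`. -/
theorem stmt18 (n : ℕ) (hodd : Odd n) (hn : 3 ≤ n)
    (F : Type*) [Field F] [Fintype F] :
    Nat.card {M : Matrix (Fin n) (Fin n) F // Mᵀ = -M ∧ ∀ i, M i i = 0} =
      Fintype.card F ^ (n * (n - 1) / 2) ∧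
    1 - ((n : ℝ) - 1) / (2 * (Fintype.card F : ℝ) ^ 3) ≤
      (Nat.card {M : Matrix (Fin n) (Fin n) F //
          (Mᵀ = -M ∧ ∀ i, M i i = 0) ∧ M.rank = n - 1} : ℝ) /
        (Fintype.card F : ℝ) ^ (n * (n - 1) / 2) := by
  refine ⟨Alternating.card_isAlt_fin F n, ?_⟩
  obtain ⟨m, rfl⟩ := hodd
  have hq1 : (1 : ℝ) ≤ (Fintype.card F : ℝ) := by exact_mod_cast Fintype.card_pos
  have hexp : (2 * m + 1) * (2 * m + 1 - 1) / 2 = (2 * m + 1) * m := by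
    rw [Nat.add_sub_cancel, show (2 * m + 1) * (2 * m) = (2 * m + 1) * m * 2 by ring]
    exact Nat.mul_div_cancel _ two_pos
  have hcard : Nat.card {M : Matrix (Fin (2 * m + 1)) (Fin (2 * m + 1)) F //
      (Mᵀ = -M ∧ ∀ i, M i i = 0) ∧ M.rank = 2 * m + 1 - 1} =
      Nat.card (Alternating.Good (Fin (2 * m + 1)) F) := by
    simp only [Alternating.Good, Alternating.IsAlt, Fintype.card_fin]
  have hge := Alternating.card_good_ge F m
  rw [hexp, hcard, le_div_iff₀ (by positivity), mul_comm]
  refine le_trans (mul_le_mul_of_nonneg_left ?_ (by positivity)) hge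
  have hinv : 1 / (Fintype.card F : ℝ) ^ 3 ≤ 1 :=
    div_le_one_of_le₀ (one_le_pow₀ hq1) (by positivity)
  have hb := one_add_mul_le_pow (a := -(1 / (Fintype.card F : ℝ) ^ 3)) (by linarith) m
  rw [← sub_eq_add_neg] at hb
  refine le_trans (le_of_eq ?_) hb
  push_cast
  field_simp
  ring
end
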